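/- arXiv:1405.5293 — 6 statements merged into one kernel-verified Lean document; each statement's English description precedes it below -/
import Mathlib

section
/- For every ideal I of the polynomial ring R = ℂ[x₁,…,xₙ], the Macaulay dual space of I at the origin equals the Macaulay dual space of its extension to the localization at the origin; concretely, a functional p ∈ D₀ satisfies p(f) = 0 for all f ∈ I if and only if p(g) = 0 for all g in the contraction IR₀ ∩ R = {g ∈ R : there exists h ∈ R with h(0) ≠ 0 and h·g ∈ I}. -/
open MvPolynomial

noncomputable section

/-- The polynomial ring `R = ℂ[x₁,…,xₙ]`. -/
abbrev Rn (n : ℕ) := MvPolynomial (Fin n) ℂ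

/-- Total degree of a monomial exponent vector. -/
def mdeg {n : ℕ} (m : Fin n →₀ ℕ) : ℕ := m.sum fun _ e => e

/-- The truncated dual space `D₀^d`: linear functionals on `R` vanishing on all
monomials of degree greater than `d` (identified with `(R_d)*`). -/
def DualTrunc (n d : ℕ) : Submodule ℂ (Module.Dual ℂ (Rn n)) where
  carrier := {p | ∀ m : Fin n →₀ ℕ, d < mdeg m → p (monomial m 1) = 0}
  add_mem' := by
    intro p q hp hq m hm
    simp [hp m hm, hq m hm]
  zero_mem' := by
    intro m hm
    simp
  smul_mem' := by
    intro c p hp m hm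
    simp [hp m hm]

/-- The Macaulay dual space `D₀` at the origin: linear functionals on `R` vanishing
on all monomials of sufficiently large degree, i.e. `⋃ d, D₀^d`. -/
def MacaulayDual (n : ℕ) : Submodule ℂ (Module.Dual ℂ (Rn n)) where
  carrier := {p | ∃ d : ℕ, ∀ m : Fin n →₀ ℕ, d < mdeg m → p (monomial m 1) = 0}
  add_mem' := by
    rintro p q ⟨d₁, hp⟩ ⟨d₂, hq⟩
    refine ⟨max d₁ d₂, fun m hm => ?_⟩
    simp [hp m (lt_of_le_of_lt (le_max_left _ _) hm),
          hq m (lt_of_le_of_lt (le_max_right _ _) hm)]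
  zero_mem' := ⟨0, fun m _ => rfl⟩
  smul_mem' := by
    rintro c p ⟨d, hp⟩
    exact ⟨d, fun m hm => by simp [hp m hm]⟩

/-- The space of linear functionals annihilating an ideal `I`. -/
def annIdeal {n : ℕ} (I : Ideal (Rn n)) : Submodule ℂ (Module.Dual ℂ (Rn n)) where
  carrier := {p | ∀ f ∈ I, p f = 0}
  add_mem' := by
    intro p q hp hq f hf
    simp [hp f hf, hq f hf]
  zero_mem' := by intro f _; rfl
  smul_mem' := by
    intro c p hp f hf
    simp [hp f hf]

/-- The Macaulay dual space `D₀[I] = {p ∈ D₀ : p(f) = 0 for all f ∈ I}`. -/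
def dualOf {n : ℕ} (I : Ideal (Rn n)) : Submodule ℂ (Module.Dual ℂ (Rn n)) :=
  MacaulayDual n ⊓ annIdeal I

/-- The truncated dual space `D₀^d[I] = D₀[I] ∩ D₀^d`. -/
def truncDualOf {n : ℕ} (I : Ideal (Rn n)) (d : ℕ) : Submodule ℂ (Module.Dual ℂ (Rn n)) :=
  DualTrunc n d ⊓ annIdeal I

/-- The contraction `IR₀ ∩ R` of the extension of `I` to the localization at the
origin: `{g ∈ R : ∃ h ∈ R with h(0) ≠ 0 and h·g ∈ I}`. -/
def contraction {n : ℕ} (I : Ideal (Rn n)) : Set (Rn n) :=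
  {g | ∃ h : Rn n, eval (0 : Fin n → ℂ) h ≠ 0 ∧ h * g ∈ I}

/-- The maximal ideal `m = ⟨x₁,…,xₙ⟩` at the origin, as the kernel of evaluation at `0`. -/
def mIdeal (n : ℕ) : Ideal (Rn n) := RingHom.ker (eval (0 : Fin n → ℂ))

instance (n : ℕ) : (mIdeal n).IsPrime := RingHom.ker_isPrime _

/-- The localization `R₀` of `R` at the maximal ideal of the origin. -/
abbrev Loc (n : ℕ) := Localization.AtPrime (mIdeal n)

/-- The extension `JR₀` of an ideal `J ⊆ R` to the localization `R₀`. -/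
def extIdeal {n : ℕ} (J : Ideal (Rn n)) : Ideal (Loc n) :=
  J.map (algebraMap (Rn n) (Loc n))

/-- Differentiation `σ_f : D₀ → D₀` by `f ∈ R`, `(σ_f p)(g) = p (f * g)`. -/
def sigma {n : ℕ} (f : Rn n) : Module.Dual ℂ (Rn n) →ₗ[ℂ] Module.Dual ℂ (Rn n) :=
  (LinearMap.mulLeft ℂ f).dualMap

/-- A graded monomial order on exponent vectors in `ℕⁿ`: a strict total order
compatible with addition and refining total degree. -/
structure IsGradedMonomialOrder {n : ℕ} (lt : (Fin n →₀ ℕ) → (Fin n →₀ ℕ) → Prop) : Prop where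
  irrefl : ∀ a, ¬ lt a a
  trans : ∀ a b c, lt a b → lt b c → lt a c
  total : ∀ a b, a ≠ b → lt a b ∨ lt b a
  add_compat : ∀ a b c, lt a b → lt (a + c) (b + c)
  deg_compat : ∀ a b, mdeg a < mdeg b → lt a b

/-- `β` is the lead monomial of `g` for the graded local order associated to `lt`:
the `lt`-minimal monomial of `g` with nonzero coefficient. -/
def IsLeadMonomial {n : ℕ} (lt : (Fin n →₀ ℕ) → (Fin n →₀ ℕ) → Prop)
    (g : Rn n) (β : Fin n →₀ ℕ) : Prop :=
  coeff β g ≠ 0 ∧ ∀ γ : Fin n →₀ ℕ, coeff γ g ≠ 0 → γ ≠ β → lt β γ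

/-- The initial ideal `in_≥(IR₀) ∩ R`: the monomial ideal of `R` generated by the
lead monomials of nonzero elements of the contraction `IR₀ ∩ R`. -/
def initialIdeal {n : ℕ} (lt : (Fin n →₀ ℕ) → (Fin n →₀ ℕ) → Prop)
    (I : Ideal (Rn n)) : Ideal (Rn n) :=
  Ideal.span {q | ∃ g ∈ contraction I, g ≠ 0 ∧
    ∃ β : Fin n →₀ ℕ, IsLeadMonomial lt g β ∧ q = monomial β 1}

/-- `∂^α` is (up to the scalar `p(x^α)`) the initial term of the dual functional `p`:
`α` is the `lt`-maximal monomial with nonzero coefficient in `p`. -/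
def IsInitialOf {n : ℕ} (lt : (Fin n →₀ ℕ) → (Fin n →₀ ℕ) → Prop)
    (p : Module.Dual ℂ (Rn n)) (α : Fin n →₀ ℕ) : Prop :=
  p (monomial α 1) ≠ 0 ∧ ∀ β : Fin n →₀ ℕ, p (monomial β 1) ≠ 0 → β ≠ α → lt β α

/-- Multiplying by a polynomial without constant term raises the order. -/
lemma order_mul {n : ℕ} (u f : Rn n) (k : ℕ) (hu : coeff 0 u = 0)
    (hf : ∀ m, mdeg m < k → coeff m f = 0) :
    ∀ m, mdeg m < k + 1 → coeff m (u * f) = 0 := by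
  intro m hm
  rw [coeff_mul]
  refine Finset.sum_eq_zero fun x hx => ?_
  rw [Finset.HasAntidiagonal.mem_antidiagonal] at hx
  by_cases h0 : x.1 = 0
  · rw [h0, hu, zero_mul]
  · have h1 : mdeg m = mdeg x.1 + mdeg x.2 := by
      rw [← hx]
      exact map_add Finsupp.degree x.1 x.2
    have h2 : mdeg x.1 ≠ 0 := fun h => h0 ((Finsupp.degree_eq_zero_iff x.1).1 h)
    rw [hf x.2 (by omega), mul_zero]

lemma order_pow_mul {n : ℕ} (u g : Rn n) (hu : coeff 0 u = 0) (k : ℕ) :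
    ∀ m, mdeg m < k → coeff m (u ^ k * g) = 0 := by
  induction k with
  | zero => intro m hm; omega
  | succ k ih =>
    rw [pow_succ', mul_assoc]
    exact order_mul u _ k hu ih

/-- For every ideal `I` of `R = ℂ[x₁,…,xₙ]`, a functional `p ∈ D₀`
annihilates `I` iff it annihilates the contraction `IR₀ ∩ R`. -/
theorem dual_eq_dual_of_localization (n : ℕ) (I : Ideal (Rn n))
    (p : Module.Dual ℂ (Rn n)) (hp : p ∈ MacaulayDual n) :
    (∀ f ∈ I, p f = 0) ↔ (∀ g ∈ contraction I, p g = 0) := by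
  constructor
  · intro hI g hg
    obtain ⟨h, hh, hgI⟩ := hg
    obtain ⟨d, hd⟩ := hp
    set c := eval (0 : Fin n → ℂ) h with hc
    set u : Rn n := 1 - C c⁻¹ * h with hu_def
    have hu : coeff 0 u = 0 := by
      have : eval (0 : Fin n → ℂ) u = 0 := by
        rw [hu_def, map_sub, map_mul, eval_C, map_one, ← hc, inv_mul_cancel₀ hh, sub_self]
      rwa [eval_zero, constantCoeff_eq] at this
    have hkey : p (u ^ (d + 1) * g) = 0 := by
      rw [(u ^ (d + 1) * g).as_sum, map_sum]
      refine Finset.sum_eq_zero fun m _ => ?_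
      by_cases hm : mdeg m < d + 1
      · rw [order_pow_mul u g hu (d + 1) m hm, monomial_zero, map_zero]
      · have := hd m (by omega)
        rw [← mul_one (coeff m _), ← smul_eq_mul, ← smul_monomial, map_smul, this, smul_zero]
    obtain ⟨q, hq⟩ : (1 - u) ∣ 1 - u ^ (d + 1) := by
      simpa using sub_dvd_pow_sub_pow 1 u (d + 1)
    have hg : g = u ^ (d + 1) * g + C c⁻¹ * q * (h * g) := by
      have h1 : 1 - u = C c⁻¹ * h := by rw [hu_def]; ring
      rw [h1] at hq
      linear_combination g * hq
    rw [hg, map_add, hkey, hI _ (I.mul_mem_left _ hgI), add_zero]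
  · intro hc f hf
    exact hc f ⟨1, by simp, by simpa using hf⟩
end
end

section
/- For every ideal I of R = ℂ[x₁,…,xₙ], the orthogonal of the Macaulay dual space D₀[I] recovers exactly the localized ideal: a polynomial g ∈ R satisfies p(g) = 0 for all p ∈ D₀[I] if and only if g lies in the contraction IR₀ ∩ R = {g ∈ R : there exists h ∈ R with h(0) ≠ 0 and h·g ∈ I}. -/
open MvPolynomial

noncomputable section

lemma mdeg_eq_degree {n : ℕ} (m : Fin n →₀ ℕ) : mdeg m = m.degree := rfl

/-- A functional killing all monomials of degree `> d` kills `m^(d+1)`. -/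
lemma kills_pow {n d : ℕ} (p : Module.Dual ℂ (Rn n))
    (hp : ∀ m : Fin n →₀ ℕ, d < mdeg m → p (monomial m 1) = 0)
    (f : Rn n) (hf : f ∈ idealOfVars (Fin n) ℂ ^ (d + 1)) : p f = 0 := by
  rw [mem_pow_idealOfVars_iff] at hf
  rw [f.as_sum, map_sum]
  refine Finset.sum_eq_zero fun m hm => ?_
  have h1 : monomial m (coeff m f) = coeff m f • (monomial m (1 : ℂ)) := by
    simp [smul_monomial]
  rw [h1, map_smul, hp m, smul_zero]
  have := hf m hm
  rw [mdeg_eq_degree]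
  omega

lemma mem_vars_of_eval {n : ℕ} (f : Rn n) (hf : eval (0 : Fin n → ℂ) f = 0) :
    f ∈ idealOfVars (Fin n) ℂ := by
  rw [← pow_one (idealOfVars (Fin n) ℂ), mem_pow_idealOfVars_iff]
  intro m hm
  by_contra hlt
  have h0 : m = 0 := by
    rw [← Finsupp.degree_eq_zero_iff]; omega
  rw [h0, mem_support_iff] at hm
  apply hm
  have : eval (0 : Fin n → ℂ) f = constantCoeff f := by rw [constantCoeff_eq]; simp [constantCoeff_eq]
  rw [← constantCoeff_eq, ← this, hf]

lemma eval_of_mem_vars {n : ℕ} (f : Rn n) (hf : f ∈ idealOfVars (Fin n) ℂ) :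
    eval (0 : Fin n → ℂ) f = 0 := by
  have : idealOfVars (Fin n) ℂ ≤ RingHom.ker (eval (0 : Fin n → ℂ)) := by
    rw [idealOfVars, Ideal.span_le]
    rintro _ ⟨i, rfl⟩
    simp [RingHom.mem_ker]
  exact this hf

lemma mem_sup_pow {n : ℕ} (I : Ideal (Rn n)) (g : Rn n)
    (h : ∀ p ∈ dualOf I, p g = 0) (d : ℕ) :
    g ∈ I ⊔ idealOfVars (Fin n) ℂ ^ d := by
  by_contra hg
  obtain ⟨p, hpg, hp⟩ := Submodule.exists_le_ker_of_notMem (K := ℂ)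
    (p := (I ⊔ idealOfVars (Fin n) ℂ ^ d).restrictScalars ℂ) (v := g) hg
  refine hpg (h p ⟨⟨d, fun m hm => ?_⟩, fun f hf => ?_⟩)
  · refine LinearMap.mem_ker.1 (hp ?_)
    refine Submodule.mem_sup_right (S := I) ?_
    rw [monomial_mem_pow_idealOfVars_iff _ _ one_ne_zero]
    rw [mdeg_eq_degree] at hm
    exact hm.le
  · exact LinearMap.mem_ker.1 (hp (Submodule.mem_sup_left (T := idealOfVars (Fin n) ℂ ^ d) hf))

/-- The orthogonal of `D₀[I]` in `R` is exactly the contraction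
`IR₀ ∩ R = {g ∈ R : ∃ h, h(0) ≠ 0 ∧ h·g ∈ I}`. -/
theorem orthogonal_of_dual_space (n : ℕ) (I : Ideal (Rn n)) (g : Rn n) :
    (∀ p ∈ dualOf I, p g = 0) ↔ g ∈ contraction I := by
  constructor
  · intro h
    have key : (Submodule.Quotient.mk g : Rn n ⧸ I) ∈
        (⨅ i : ℕ, idealOfVars (Fin n) ℂ ^ i • ⊤ : Submodule (Rn n) (Rn n ⧸ I)) := by
      rw [Submodule.mem_iInf]
      intro d
      obtain ⟨a, ha, b, hb, hab⟩ := Submodule.mem_sup.1 (mem_sup_pow I g h d)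
      have : (Submodule.Quotient.mk g : Rn n ⧸ I) =
          b • (Submodule.Quotient.mk 1 : Rn n ⧸ I) := by
        rw [← Submodule.Quotient.mk_smul, Submodule.Quotient.eq, ← hab]
        simpa using ha
      rw [this]
      exact Submodule.smul_mem_smul hb trivial
    rw [Ideal.mem_iInf_smul_pow_eq_bot_iff] at key
    obtain ⟨⟨r, hr⟩, hrg⟩ := key
    refine ⟨1 - r, ?_, ?_⟩
    · rw [map_sub, eval_of_mem_vars r hr, map_one, sub_zero]
      exact one_ne_zero
    · have h2 : (Submodule.Quotient.mk (r • g) : Rn n ⧸ I) = Submodule.Quotient.mk g := hrg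
      have h3 := (Submodule.Quotient.eq I).1 h2.symm
      rw [smul_eq_mul] at h3
      convert h3 using 1
      ring
  · rintro ⟨h, h0, hg⟩ p ⟨⟨d, hd⟩, hI⟩
    set c := eval (0 : Fin n → ℂ) h with hc
    have hr : (1 - C c⁻¹ * h) ∈ idealOfVars (Fin n) ℂ := by
      apply mem_vars_of_eval
      rw [map_sub, map_mul, eval_C, map_one, ← hc, inv_mul_cancel₀ h0, sub_self]
    set r := 1 - C c⁻¹ * h with hrdef
    have h1 : p (r ^ (d + 1) * g) = 0 :=
      kills_pow p hd _ (Ideal.mul_mem_right _ _ (Ideal.pow_mem_pow hr _))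
    have h2 : g - r ^ (d + 1) * g ∈ I := by
      obtain ⟨q, hq⟩ := sub_one_dvd_pow_sub_one r (d + 1)
      have : g - r ^ (d + 1) * g = (C c⁻¹ * q) * (h * g) := by
        have e : r ^ (d + 1) = 1 + (r - 1) * q := by rw [← hq]; ring
        rw [e, hrdef]; ring
      rw [this]
      exact Ideal.mul_mem_left _ _ hg
    have h3 := hI _ h2
    rwa [map_sub, h1, sub_zero] at h3
end
end

section
/- For every ideal I of R = ℂ[x₁,…,xₙ] and every f ∈ R, differentiation of the dual space by f yields the dual space of the colon ideal: σ_f D₀[I] = D₀[I : ⟨f⟩], where I : ⟨f⟩ = {g ∈ R : f·g ∈ I}. -/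
open MvPolynomial

noncomputable section

theorem macaulay_vanish_iff {n : ℕ} (p : Module.Dual ℂ (Rn n)) (d : ℕ) :
    (∀ m : Fin n →₀ ℕ, d < mdeg m → p (monomial m 1) = 0) ↔
      ∀ g ∈ (MvPolynomial.idealOfVars (Fin n) ℂ) ^ (d + 1), p g = 0 := by
  constructor
  · intro h g hg
    rw [MvPolynomial.mem_pow_idealOfVars_iff] at hg
    rw [g.as_sum, map_sum]
    refine Finset.sum_eq_zero fun m hm => ?_
    have h1 : (monomial m (coeff m g) : Rn n) = coeff m g • monomial m 1 := by
      rw [smul_monomial, smul_eq_mul, mul_one]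
    have h2 : d + 1 ≤ mdeg m := hg m hm
    rw [h1, map_smul, h m h2, smul_zero]
  · intro h m hm
    refine h _ ?_
    rw [MvPolynomial.mem_pow_idealOfVars_iff]
    intro x hx
    have : x = m := by
      by_contra hne
      exact (mem_support_iff.mp hx) (by rw [coeff_monomial, if_neg (Ne.symm hne)])
    subst this
    exact hm

theorem artin_rees_colon {R : Type*} [CommRing R] [IsNoetherianRing R] (I J : Ideal R) (f : R) (d : ℕ) :
    ∃ N : ℕ, ∀ g : R, f * g ∈ I ⊔ J ^ N → g ∈ I.colon (Ideal.span {f}) ⊔ J ^ d := by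
  obtain ⟨k, hk⟩ := Ideal.exists_pow_inf_eq_pow_smul J (I ⊔ Ideal.span {f})
  refine ⟨k + d, fun g hg => ?_⟩
  obtain ⟨i, hi, u, hu, hiu⟩ := Submodule.mem_sup.mp hg
  have hu2 : u ∈ J ^ (k + d) • (⊤ : Ideal R) ⊓ (I ⊔ Ideal.span {f}) := by
    refine Submodule.mem_inf.mpr ⟨by rw [smul_eq_mul, Ideal.mul_top]; exact hu, ?_⟩
    have : u = - i + g * f := by rw [mul_comm g f, ← hiu]; ring
    rw [this]
    exact Submodule.add_mem_sup (I.neg_mem hi) (Ideal.mul_mem_left _ _ (Ideal.mem_span_singleton_self f))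
  have hkd := hk (k + d) (Nat.le_add_right k d)
  rw [Nat.add_sub_cancel_left] at hkd
  rw [hkd] at hu2
  have hu3 : u ∈ J ^ d * (I ⊔ Ideal.span {f}) := by
    have h := Submodule.smul_mono (le_refl (J ^ d))
      (inf_le_right : J ^ k • (⊤ : Ideal R) ⊓ (I ⊔ Ideal.span {f}) ≤ I ⊔ Ideal.span {f})
    exact h hu2
  rw [Ideal.mul_sup] at hu3
  obtain ⟨a, ha, b, hb, hab⟩ := Submodule.mem_sup.mp hu3
  obtain ⟨c, hc, hcb⟩ := Ideal.mem_mul_span_singleton.mp hb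
  refine Submodule.mem_sup.mpr ⟨g - c, ?_, c, hc, sub_add_cancel g c⟩
  rw [Ideal.mem_colon_span_singleton]
  have : (g - c) * f = i + a := by
    have : f * g = i + (a + c * f) := by rw [hcb, hab, hiu]
    linear_combination this
  rw [this]
  exact I.add_mem hi (Ideal.mul_le_right ha)

/-- `σ_f D₀[I] = D₀[I : ⟨f⟩]`. -/
theorem sigma_dual_eq_dual_colon (n : ℕ) (I : Ideal (Rn n)) (f : Rn n) :
    Submodule.map (sigma f) (dualOf I) = dualOf (I.colon (Ideal.span {f})) := by
  apply le_antisymm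
  · rintro _ ⟨p, ⟨⟨d, hd⟩, hI⟩, rfl⟩
    refine ⟨⟨d, ?_⟩, ?_⟩
    · rw [macaulay_vanish_iff] at hd ⊢
      intro g hg
      exact hd (f * g) (Ideal.mul_mem_left _ _ hg)
    · intro g hg
      rw [Ideal.mem_colon_span_singleton, mul_comm] at hg
      exact hI (f * g) hg
  · rintro p ⟨⟨d, hd⟩, hI⟩
    rw [macaulay_vanish_iff] at hd
    obtain ⟨N, hN⟩ := artin_rees_colon I (MvPolynomial.idealOfVars (Fin n) ℂ) f (d + 1)
    let K : Submodule ℂ (Rn n) :=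
      (I ⊔ (MvPolynomial.idealOfVars (Fin n) ℂ) ^ N).restrictScalars ℂ
    have hp : p ∈ LinearMap.range (K.mkQ.comp (LinearMap.mulLeft ℂ f)).dualMap := by
      rw [LinearMap.range_dualMap_eq_dualAnnihilator_ker, Submodule.mem_dualAnnihilator]
      intro g hg
      have hg' : f * g ∈ K := by
        rw [LinearMap.mem_ker, LinearMap.comp_apply, Submodule.mkQ_apply,
          Submodule.Quotient.mk_eq_zero] at hg
        exact hg
      obtain ⟨a, ha, b, hb, rfl⟩ := Submodule.mem_sup.mp (hN g hg')
      rw [map_add, hI a ha, hd b hb, add_zero]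
    obtain ⟨q, hq⟩ := hp
    have hK : ∀ g ∈ K, (q.comp K.mkQ) g = 0 := by
      intro g hg
      rw [LinearMap.comp_apply, Submodule.mkQ_apply, (Submodule.Quotient.mk_eq_zero K).mpr hg,
        map_zero]
    refine ⟨q.comp K.mkQ, ⟨⟨N, ?_⟩, fun g hg => hK g (Ideal.mem_sup_left hg)⟩, ?_⟩
    · rw [macaulay_vanish_iff]
      intro g hg
      exact hK g (Ideal.mem_sup_right (Ideal.pow_le_pow_right (Nat.le_succ N) hg))
    · rw [← hq]
      rfl
end
end

section
/- Let I = ⟨f₁,…,f_s⟩ be an ideal of R = ℂ[x₁,…,xₙ] and let k ≥ 1. Then the degree-k truncated dual space of I is characterized inductively: D₀^k[I] = {p ∈ D₀^k : σ_{x_j} p ∈ D₀^{k−1}[I] for all j = 1,…,n, and p(f_i) = 0 for all i = 1,…,s}. -/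
open MvPolynomial

noncomputable section

/-- For `I = ⟨F⟩` and `k ≥ 1`,
`D₀^k[I] = {p ∈ D₀^k : σ_{x_j} p ∈ D₀^{k−1}[I] for all j, and p(f) = 0 for all f ∈ F}`. -/
theorem truncated_dual_inductive (n : ℕ) (F : Finset (Rn n)) (k : ℕ) (hk : 1 ≤ k)
    (p : Module.Dual ℂ (Rn n)) :
    p ∈ truncDualOf (Ideal.span (F : Set (Rn n))) k ↔
      (p ∈ DualTrunc n k ∧
        (∀ j : Fin n, sigma (X j) p ∈ truncDualOf (Ideal.span (F : Set (Rn n))) (k - 1)) ∧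
        (∀ f ∈ F, p f = 0)) := by
  have hs : ∀ (f g : Rn n), sigma f p g = p (f * g) := fun f g => rfl
  constructor
  · rintro ⟨h1, h2⟩
    refine ⟨h1, fun j => ⟨?_, ?_⟩, fun f hf => h2 f (Ideal.subset_span hf)⟩
    · intro m hm
      rw [hs, X, monomial_mul, one_mul]
      apply h1
      have h : mdeg (Finsupp.single j 1 + m) = 1 + mdeg m := by
        unfold mdeg
        rw [Finsupp.sum_add_index' (fun _ => rfl) (fun _ _ _ => rfl),
          Finsupp.sum_single_index rfl]
      omega
    · intro f hf
      rw [hs]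
      exact h2 _ (Ideal.mul_mem_left _ _ hf)
  · rintro ⟨h1, h2, h3⟩
    refine ⟨h1, fun f hf => ?_⟩
    have key : ∀ a : Rn n, p (a * f) = 0 := by
      induction hf using Submodule.span_induction with
      | mem f hf =>
        intro a
        induction a using MvPolynomial.induction_on with
        | C c => rw [← smul_eq_C_mul, map_smul, h3 f hf, smul_zero]
        | add a b ha hb => rw [add_mul, map_add, ha, hb, add_zero]
        | mul_X a j _ =>
          rw [mul_comm a, mul_assoc, ← hs]
          exact (h2 j).2 _ (Ideal.mul_mem_left _ _ (Ideal.subset_span hf))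
      | zero => intro a; rw [mul_zero, map_zero]
      | add x y _ _ hx hy => intro a; rw [mul_add, map_add, hx, hy, add_zero]
      | smul b x _ hx => intro a; rw [smul_eq_mul, ← mul_assoc, hx]
    simpa using key 1
end
end

section
/- Let I be an ideal of R = ℂ[x₁,…,xₙ], let ≻ be a graded monomial order on ℕⁿ (a total order compatible with addition on exponent vectors and refining total degree), and let the associated graded local order take the lead monomial of a nonzero g ∈ R to be its ≻-minimal monomial with nonzero coefficient, while the initial term of a nonzero p ∈ D₀ is its ≻-maximal monomial functional with nonzero coefficient. Then for every α ∈ ℕⁿ, the monomial x^α lies in the initial ideal in_≥(IR₀) (the monomial ideal generated by the lead monomials of nonzero elements of the contraction IR₀ ∩ R) if and only if ∂^α is NOT the initial term of any nonzero element of D₀[I]. -/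
open MvPolynomial

noncomputable section

lemma lead_mul {n : ℕ} {lt : (Fin n →₀ ℕ) → (Fin n →₀ ℕ) → Prop}
    (hlt : IsGradedMonomialOrder lt) {f g : Rn n} {β γ : Fin n →₀ ℕ}
    (hf : IsLeadMonomial lt f β) (hg : IsLeadMonomial lt g γ) :
    IsLeadMonomial lt (f * g) (β + γ) := by
  classical
  have key : ∀ a b : Fin n →₀ ℕ, coeff a f ≠ 0 → coeff b g ≠ 0 →
      (a = β ∧ b = γ) ∨ lt (β + γ) (a + b) := by
    intro a b ha hb
    by_cases h1 : a = β
    · by_cases h2 : b = γ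
      · exact Or.inl ⟨h1, h2⟩
      · right
        have := hlt.add_compat _ _ β (hg.2 b hb h2)
        rw [h1, add_comm β γ, add_comm β b]
        exact this
    · right
      have h3 := hlt.add_compat _ _ γ (hf.2 a ha h1)
      by_cases h2 : b = γ
      · rw [h2]; exact h3
      · have h4 := hlt.add_compat _ _ a (hg.2 b hb h2)
        rw [add_comm γ a, add_comm b a] at h4
        exact hlt.trans _ _ _ h3 h4
  constructor
  · rw [coeff_mul, Finset.sum_eq_single (β, γ)]
    · exact mul_ne_zero hf.1 hg.1
    · rintro ⟨a, b⟩ hab hne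
      by_contra h0
      have hab' : a + b = β + γ := by simpa using hab
      rcases key a b (left_ne_zero_of_mul h0) (right_ne_zero_of_mul h0) with ⟨h1, h2⟩ | h
      · exact hne (by rw [h1, h2])
      · rw [hab'] at h
        exact hlt.irrefl _ h
    · intro h
      simp at h
  · intro δ hδ hne
    rw [coeff_mul] at hδ
    obtain ⟨⟨a, b⟩, hab, h0⟩ := Finset.exists_ne_zero_of_sum_ne_zero hδ
    have hab' : a + b = δ := by simpa using hab
    rcases key a b (left_ne_zero_of_mul h0) (right_ne_zero_of_mul h0) with ⟨h1, h2⟩ | h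
    · exact absurd (by rw [← hab', h1, h2]) hne
    · rwa [hab'] at h

lemma lead_unit {n : ℕ} {lt : (Fin n →₀ ℕ) → (Fin n →₀ ℕ) → Prop}
    (hlt : IsGradedMonomialOrder lt) {h : Rn n}
    (h0 : eval (0 : Fin n → ℂ) h ≠ 0) : IsLeadMonomial lt h 0 := by
  constructor
  · have : eval (0 : Fin n → ℂ) h = coeff 0 h := by
      rw [← constantCoeff_eq]
      simp
    rwa [this] at h0
  · intro γ _ hγ
    apply hlt.deg_compat
    have h1 : mdeg (0 : Fin n →₀ ℕ) = 0 := by simp [mdeg]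
    rw [h1, Nat.pos_iff_ne_zero]
    intro h2
    apply hγ
    have h3 : ∀ i, γ i = 0 := by simpa [mdeg, Finsupp.sum] using h2
    exact Finsupp.ext h3

lemma lead_monomial {n : ℕ} (lt : (Fin n →₀ ℕ) → (Fin n →₀ ℕ) → Prop)
    (β : Fin n →₀ ℕ) : IsLeadMonomial lt (monomial β (1 : ℂ)) β := by
  classical
  constructor
  · simp
  · intro γ hγ hne
    rw [coeff_monomial, if_neg (Ne.symm hne)] at hγ
    exact absurd rfl hγ

lemma mem_initialIdeal_iff {n : ℕ} {lt : (Fin n →₀ ℕ) → (Fin n →₀ ℕ) → Prop}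
    (hlt : IsGradedMonomialOrder lt) (I : Ideal (Rn n)) (α : Fin n →₀ ℕ) :
    monomial α (1 : ℂ) ∈ initialIdeal lt I ↔ ∃ f ∈ I, IsLeadMonomial lt f α := by
  constructor
  · intro h
    have hs : initialIdeal lt I = Ideal.span ((fun s => monomial s (1 : ℂ)) ''
        {β | ∃ g ∈ contraction I, g ≠ 0 ∧ IsLeadMonomial lt g β}) := by
      unfold initialIdeal
      congr 1
      ext q
      constructor
      · rintro ⟨g, hg, hg0, β, hβ, rfl⟩
        exact ⟨β, ⟨g, hg, hg0, hβ⟩, rfl⟩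
      · rintro ⟨β, ⟨g, hg, hg0, hβ⟩, rfl⟩
        exact ⟨g, hg, hg0, β, hβ, rfl⟩
    rw [hs, mem_ideal_span_monomial_image] at h
    obtain ⟨β, ⟨g, ⟨u, hu, hug⟩, -, hβ⟩, hle⟩ := h α (by simp)
    refine ⟨monomial (α - β) 1 * (u * g), I.mul_mem_left _ hug, ?_⟩
    have := lead_mul hlt (lead_monomial lt (α - β)) (lead_mul hlt (lead_unit hlt hu) hβ)
    rwa [zero_add, tsub_add_cancel_of_le hle] at this
  · rintro ⟨f, hf, hα⟩
    refine Ideal.subset_span ⟨f, ⟨1, by simp, by simpa using hf⟩, ?_, α, hα, rfl⟩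
    rintro rfl
    exact hα.1 (by simp)

/-- `x^α ∈ in_≥(IR₀)` iff `∂^α` is not the initial term of any nonzero
element of `D₀[I]`. -/
theorem monomial_mem_initial_ideal_iff (n : ℕ) (I : Ideal (Rn n))
    (lt : (Fin n →₀ ℕ) → (Fin n →₀ ℕ) → Prop) (hlt : IsGradedMonomialOrder lt)
    (α : Fin n →₀ ℕ) :
    monomial α (1 : ℂ) ∈ initialIdeal lt I ↔
      ¬ ∃ p ∈ dualOf I, p ≠ 0 ∧ IsInitialOf lt p α := by
  rw [mem_initialIdeal_iff hlt]
  constructor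
  · rintro ⟨f, hf, hα⟩ ⟨p, hp, -, hpα⟩
    have h0 : p f = 0 := hp.2 f hf
    have hsum : p f = coeff α f * p (monomial α 1) := by
      conv_lhs => rw [f.as_sum, map_sum]
      rw [Finset.sum_eq_single α]
      · rw [← mul_one (coeff α f), ← smul_eq_mul, ← smul_monomial, map_smul]
        simp
      · intro γ hγ hne
        rw [← mul_one (coeff γ f), ← smul_eq_mul, ← smul_monomial, map_smul]
        by_contra h
        have h1 : p (monomial γ 1) ≠ 0 := fun h2 => h (by rw [h2, smul_zero])
        exact hlt.irrefl _ (hlt.trans _ _ _ (hα.2 γ (mem_support_iff.1 hγ) hne)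
          (hpα.2 γ h1 hne))
      · intro h
        exact absurd (notMem_support_iff.1 h) hα.1
    rw [hsum] at h0
    exact mul_ne_zero hα.1 hpα.1 h0
  · intro hno
    by_contra hf
    apply hno
    let V : Submodule ℂ (Rn n) := restrictSupport ℂ {γ | lt α γ}
    let W : Submodule ℂ (Rn n) := I.restrictScalars ℂ ⊔ V
    have hW : monomial α (1 : ℂ) ∉ W := by
      intro h
      obtain ⟨f, hfI, v, hv, hfv⟩ := Submodule.mem_sup.1 h
      have hv' : ∀ γ, coeff γ v ≠ 0 → lt α γ := by
        intro γ hγ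
        exact (mem_restrictSupport_iff ℂ).1 hv (mem_support_iff.2 hγ)
      have hfe : f = monomial α (1 : ℂ) - v := eq_sub_of_add_eq hfv
      refine hf ⟨f, hfI, ?_, ?_⟩
      · have : coeff α v = 0 := by
          by_contra h
          exact hlt.irrefl _ (hv' _ h)
        rw [hfe, coeff_sub, this]
        simp
      · intro γ hγ hne
        apply hv'
        rw [hfe, coeff_sub, coeff_monomial, if_neg (Ne.symm hne)] at hγ
        intro h
        exact hγ (by rw [h, sub_zero])
    obtain ⟨p, hpα, hpW⟩ := Submodule.exists_le_ker_of_notMem hW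
    have hpV : ∀ γ, lt α γ → p (monomial γ 1) = 0 := by
      intro γ hγ
      refine hpW (Submodule.mem_sup_right ((mem_restrictSupport_iff ℂ).2 ?_))
      intro δ hδ
      have : δ = γ := by simpa using support_monomial_subset hδ
      rw [this]; exact hγ
    refine ⟨p, ⟨⟨mdeg α, fun m hm => hpV m (hlt.deg_compat _ _ hm)⟩, fun f hfI =>
      hpW (Submodule.mem_sup_left hfI)⟩, ?_, hpα, ?_⟩
    · rintro rfl
      exact hpα rfl
    · intro β hβ hne
      rcases hlt.total _ _ hne with h | h
      · exact h
      · exact absurd (hpV _ h) hβ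
end
end

section
/- Let I be an ideal of R = ℂ[x₁,…,xₙ], let ≻ be a graded monomial order on ℕⁿ, and let J = in_≥(IR₀) ∩ R be the monomial ideal in R generated by the ≻-minimal lead monomials of nonzero elements of the contraction IR₀ ∩ R. Then the local Hilbert functions of I and of its initial ideal agree: for every d ≥ 0, dim_ℂ D₀^d[I] = dim_ℂ D₀^d[J]. -/
open MvPolynomial

noncomputable section

/-- Exponents of lead monomials of elements of `I`. -/
def leadSet {n : ℕ} (lt : (Fin n →₀ ℕ) → (Fin n →₀ ℕ) → Prop) (I : Ideal (Rn n)) :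
    Set (Fin n →₀ ℕ) := {β | ∃ f ∈ I, IsLeadMonomial lt f β}

/-- The span of monomials of degree above `d`, plus `I`. -/
def truncW {n : ℕ} (I : Ideal (Rn n)) (d : ℕ) : Submodule ℂ (Rn n) :=
  I.restrictScalars ℂ ⊔ Submodule.span ℂ ((fun m => monomial m (1:ℂ)) '' {m | d < mdeg m})

lemma truncDualOf_eq {n : ℕ} (I : Ideal (Rn n)) (d : ℕ) :
    truncDualOf I d = (truncW I d).dualAnnihilator := by
  ext p
  rw [truncW, Submodule.dualAnnihilator_sup_eq, Submodule.mem_inf, truncDualOf, Submodule.mem_inf,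
    and_comm]
  refine and_congr ?_ ?_
  · rw [Submodule.mem_dualAnnihilator]; rfl
  · rw [Submodule.mem_dualAnnihilator]
    constructor
    · intro h w hw
      induction hw using Submodule.span_induction with
      | mem x hx => obtain ⟨m, hm, rfl⟩ := hx; exact h m hm
      | zero => simp
      | add x y _ _ hx hy => simp [hx, hy]
      | smul a x _ hx => simp [hx]
    · intro h m hm
      exact h _ (Submodule.subset_span ⟨m, hm, rfl⟩)

lemma exists_min_of_order {n : ℕ} {lt : (Fin n →₀ ℕ) → (Fin n →₀ ℕ) → Prop}
    (hlt : IsGradedMonomialOrder lt) (s : Finset (Fin n →₀ ℕ)) (hs : s.Nonempty) :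
    ∃ β ∈ s, ∀ γ ∈ s, γ ≠ β → lt β γ := by
  induction hs using Finset.Nonempty.cons_induction with
  | singleton a => exact ⟨a, by simp, by simp⟩
  | cons a s ha hs ih =>
    obtain ⟨β, hβ, hmin⟩ := ih
    have hne : a ≠ β := fun h => ha (h ▸ hβ)
    rcases hlt.total a β hne with h | h
    · refine ⟨a, by simp, fun γ hγ hγa => ?_⟩
      rcases Finset.mem_cons.1 hγ with rfl | hγ
      · exact absurd rfl hγa
      · by_cases hb : γ = β
        · exact hb ▸ h
        · exact hlt.trans _ _ _ h (hmin γ hγ hb)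
    · refine ⟨β, by simp [hβ], fun γ hγ hγa => ?_⟩
      rcases Finset.mem_cons.1 hγ with rfl | hγ
      · exact h
      · exact hmin γ hγ hγa

lemma coeff_high {n d : ℕ} {r : Rn n}
    (hr : r ∈ Submodule.span ℂ ((fun m => monomial m (1:ℂ)) '' {m : Fin n →₀ ℕ | d < mdeg m}))
    (γ : Fin n →₀ ℕ) (hγ : mdeg γ ≤ d) : coeff γ r = 0 := by
  classical
  induction hr using Submodule.span_induction with
  | mem x hx =>
    obtain ⟨m, hm, rfl⟩ := hx
    have : m ≠ γ := by rintro rfl; exact absurd hm (not_lt.2 hγ)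
    simp [coeff_monomial, this]
  | zero => simp
  | add x y _ _ hx hy => simp [hx, hy]
  | smul a x _ hx => simp [hx]

lemma mdeg_finite (n d : ℕ) : Finite {m : Fin n →₀ ℕ // mdeg m ≤ d} :=
  (Finsupp.finite_of_degree_le d : {m : Fin n →₀ ℕ | Finsupp.degree m ≤ d}.Finite)

/-- Standard exponents of degree at most `d`. -/
def stdSet {n : ℕ} (lt : (Fin n →₀ ℕ) → (Fin n →₀ ℕ) → Prop) (I : Ideal (Rn n)) (d : ℕ) :
    Set (Fin n →₀ ℕ) := {β | mdeg β ≤ d ∧ β ∉ leadSet lt I}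

lemma std_span {n : ℕ} {lt : (Fin n →₀ ℕ) → (Fin n →₀ ℕ) → Prop}
    (hlt : IsGradedMonomialOrder lt) (I : Ideal (Rn n)) (d : ℕ) :
    ⊤ ≤ Submodule.span ℂ (Set.range
      (fun b : stdSet lt I d => (truncW I d).mkQ (monomial b.1 (1:ℂ)))) := by
  classical
  set U := Submodule.span ℂ (Set.range
      (fun b : stdSet lt I d => (truncW I d).mkQ (monomial b.1 (1:ℂ)))) with hU
  have hhigh : ∀ m : Fin n →₀ ℕ, d < mdeg m → (truncW I d).mkQ (monomial m (1:ℂ)) ∈ U := by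
    intro m hm
    have : (truncW I d).mkQ (monomial m (1:ℂ)) = 0 := by
      rw [Submodule.mkQ_apply, Submodule.Quotient.mk_eq_zero]
      exact Submodule.mem_sup_right (Submodule.subset_span ⟨m, hm, rfl⟩)
    rw [this]; exact U.zero_mem
  have := mdeg_finite n d
  let r : {m : Fin n →₀ ℕ // mdeg m ≤ d} → {m : Fin n →₀ ℕ // mdeg m ≤ d} → Prop :=
    fun a b => lt b.1 a.1
  have : IsTrans _ r := ⟨fun a b c h1 h2 => hlt.trans _ _ _ h2 h1⟩
  have : Std.Irrefl r := ⟨fun a h => hlt.irrefl _ h⟩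
  have hwf : WellFounded r := Finite.wellFounded_of_trans_of_irrefl r
  have hlow : ∀ m : {m : Fin n →₀ ℕ // mdeg m ≤ d},
      (truncW I d).mkQ (monomial m.1 (1:ℂ)) ∈ U := by
    intro m
    induction m using hwf.induction with
    | _ m ih =>
    have ih' : ∀ γ, lt m.1 γ → (truncW I d).mkQ (monomial γ (1:ℂ)) ∈ U := by
      intro γ hγ
      by_cases hd : mdeg γ ≤ d
      · exact ih ⟨γ, hd⟩ hγ
      · exact hhigh γ (not_le.1 hd)
    by_cases hL : m.1 ∈ leadSet lt I
    · obtain ⟨f, hf, hc, hmin⟩ := hL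
      have h0 : (truncW I d).mkQ f = 0 := by
        rw [Submodule.mkQ_apply, Submodule.Quotient.mk_eq_zero]
        exact Submodule.mem_sup_left hf
      have hmon : ∀ γ, monomial γ (coeff γ f) = (coeff γ f) • monomial γ (1:ℂ) := by
        intro γ; rw [smul_monomial]; simp
      have hms : m.1 ∈ f.support := mem_support_iff.2 hc
      rw [f.as_sum, map_sum, ← Finset.add_sum_erase _ _ hms] at h0
      have h1 : (truncW I d).mkQ (monomial m.1 (coeff m.1 f)) ∈ U := by
        rw [eq_neg_of_add_eq_zero_left h0]
        refine U.neg_mem (U.sum_mem fun γ hγ => ?_)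
        rw [hmon, map_smul]
        refine U.smul_mem _ (ih' γ (hmin γ ?_ ?_))
        · exact mem_support_iff.1 (Finset.mem_of_mem_erase hγ)
        · exact Finset.ne_of_mem_erase hγ
      rw [hmon, map_smul] at h1
      exact (U.smul_mem_iff hc).1 h1
    · exact Submodule.subset_span ⟨⟨m.1, m.2, hL⟩, rfl⟩
  rintro x -
  obtain ⟨f, rfl⟩ := (truncW I d).mkQ_surjective x
  rw [f.as_sum, map_sum]
  refine U.sum_mem fun γ _ => ?_
  have hmon : monomial γ (coeff γ f) = (coeff γ f) • monomial γ (1:ℂ) := by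
    rw [smul_monomial]; simp
  rw [hmon, map_smul]
  refine U.smul_mem _ ?_
  by_cases hd : mdeg γ ≤ d
  · exact hlow ⟨γ, hd⟩
  · exact hhigh γ (not_le.1 hd)

lemma std_indep {n : ℕ} {lt : (Fin n →₀ ℕ) → (Fin n →₀ ℕ) → Prop}
    (hlt : IsGradedMonomialOrder lt) (I : Ideal (Rn n)) (d : ℕ) :
    LinearIndependent ℂ
      (fun b : stdSet lt I d => (truncW I d).mkQ (monomial b.1 (1:ℂ))) := by
  classical
  rw [linearIndependent_iff']
  intro s c hs
  have hmem : (∑ b ∈ s, c b • monomial b.1 (1:ℂ)) ∈ truncW I d := by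
    rw [← Submodule.Quotient.mk_eq_zero, ← Submodule.mkQ_apply, map_sum]
    simpa only [map_smul] using hs
  set g : Rn n := ∑ b ∈ s, c b • monomial b.1 (1:ℂ) with hg
  have hcoef : ∀ γ, coeff γ g = ∑ b ∈ s, if b.1 = γ then c b else 0 := by
    intro γ
    rw [hg, coeff_sum]
    refine Finset.sum_congr rfl fun b _ => ?_
    simp [coeff_monomial]
  have hcoefB : ∀ b ∈ s, coeff b.1 g = c b := by
    intro b hb
    rw [hcoef, Finset.sum_eq_single b]
    · simp
    · intro b' _ hne
      rw [if_neg (fun h => hne (Subtype.ext h))]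
    · intro h; exact absurd hb h
  have hsupp : ∀ γ, coeff γ g ≠ 0 → γ ∈ stdSet lt I d := by
    intro γ hγ
    by_contra hn
    apply hγ
    rw [hcoef]
    refine Finset.sum_eq_zero fun b _ => if_neg ?_
    rintro rfl; exact hn b.2
  suffices h0 : g = 0 by
    intro b hb
    rw [← hcoefB b hb, h0, coeff_zero]
  by_contra hne
  obtain ⟨β, hβ, hmin⟩ := exists_min_of_order hlt g.support (support_nonempty.2 hne)
  have hβ' := mem_support_iff.1 hβ
  obtain ⟨hβd, hβL⟩ := hsupp β hβ'
  obtain ⟨f, hf, r, hr, hfr⟩ := Submodule.mem_sup.1 hmem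
  have hc : ∀ γ, mdeg γ ≤ d → coeff γ f = coeff γ g := by
    intro γ hγ
    rw [← hfr, coeff_add, coeff_high hr γ hγ, add_zero]
  refine hβL ⟨f, hf, ?_, ?_⟩
  · rw [hc β hβd]; exact hβ'
  · intro γ hγ hγβ
    by_cases hd : mdeg γ ≤ d
    · rw [hc γ hd] at hγ
      exact hmin γ (mem_support_iff.2 hγ) hγβ
    · exact hlt.deg_compat _ _ (lt_of_le_of_lt hβd (not_le.1 hd))

/-- Lead monomials of the contraction are lead monomials of `I`. -/
lemma lead_of_contraction {n : ℕ} {lt : (Fin n →₀ ℕ) → (Fin n →₀ ℕ) → Prop}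
    (hlt : IsGradedMonomialOrder lt) (h g : Rn n) (hh : coeff 0 h ≠ 0) (β : Fin n →₀ ℕ)
    (hg : IsLeadMonomial lt g β) : IsLeadMonomial lt (h * g) β := by
  classical
  have hpos : ∀ a : Fin n →₀ ℕ, a ≠ 0 → lt 0 a := by
    intro a ha
    apply hlt.deg_compat
    have h1 : mdeg (0 : Fin n →₀ ℕ) = 0 := by simp [mdeg]
    have h2 : mdeg a ≠ 0 := fun h => ha ((Finsupp.degree_eq_zero_iff a).1 h)
    omega
  -- if a nonzero product of coefficients, then the sum of exponents is β or greater
  have key : ∀ a b : Fin n →₀ ℕ, coeff b g ≠ 0 → (a = 0 ∧ b = β) ∨ lt β (a + b) := by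
    intro a b hb
    have hb' : b = β ∨ lt β b := by
      by_cases hbβ : b = β
      · exact Or.inl hbβ
      · exact Or.inr (hg.2 b hb hbβ)
    by_cases ha : a = 0
    · subst ha
      rcases hb' with h | h
      · exact Or.inl ⟨rfl, h⟩
      · right; rwa [zero_add]
    · right
      have h1 : lt b (a + b) := by simpa using hlt.add_compat 0 a b (hpos a ha)
      rcases hb' with rfl | h
      · exact h1
      · exact hlt.trans _ _ _ h h1
  constructor
  · rw [coeff_mul, Finset.sum_eq_single (0, β)]
    · exact mul_ne_zero hh hg.1
    · rintro ⟨a, b⟩ hab hne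
      rw [Finset.HasAntidiagonal.mem_antidiagonal] at hab
      by_contra hnz
      rcases key a b (right_ne_zero_of_mul hnz) with ⟨rfl, rfl⟩ | h
      · exact hne rfl
      · simp only at hab
        rw [hab] at h; exact hlt.irrefl _ h
    · intro hn; simp at hn
  · intro γ hγ hne
    rw [coeff_mul] at hγ
    obtain ⟨⟨a, b⟩, hab, hnz⟩ := Finset.exists_ne_zero_of_sum_ne_zero hγ
    rw [Finset.HasAntidiagonal.mem_antidiagonal] at hab
    simp only at hab
    rcases key a b (right_ne_zero_of_mul hnz) with ⟨rfl, rfl⟩ | h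
    · simp at hab; exact absurd hab.symm hne
    · rwa [hab] at h

lemma leadSet_up {n : ℕ} {lt : (Fin n →₀ ℕ) → (Fin n →₀ ℕ) → Prop}
    (hlt : IsGradedMonomialOrder lt) (I : Ideal (Rn n)) (β α : Fin n →₀ ℕ)
    (h : β ∈ leadSet lt I) : α + β ∈ leadSet lt I := by
  classical
  obtain ⟨f, hf, hc, hmin⟩ := h
  refine ⟨monomial α 1 * f, I.mul_mem_left _ hf, ?_, ?_⟩
  · rw [coeff_monomial_mul]; simpa using hc
  · intro γ hγ hne
    rw [coeff_monomial_mul'] at hγ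
    split_ifs at hγ with hle
    · obtain ⟨δ, rfl⟩ := exists_add_of_le hle
      rw [add_tsub_cancel_left, one_mul] at hγ
      have := hlt.add_compat _ _ α (hmin δ hγ (fun h => hne (by rw [h])))
      rwa [add_comm β, add_comm δ] at this
    · exact absurd rfl hγ

lemma leadSet_initial {n : ℕ} {lt : (Fin n →₀ ℕ) → (Fin n →₀ ℕ) → Prop}
    (hlt : IsGradedMonomialOrder lt) (I : Ideal (Rn n)) :
    leadSet lt (initialIdeal lt I) = leadSet lt I := by
  classical
  ext β
  constructor
  · rintro ⟨f, hf, hc, -⟩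
    have hsup : ∀ γ, coeff γ f ≠ 0 → γ ∈ leadSet lt I := by
      clear hc
      unfold initialIdeal at hf
      induction hf using Submodule.span_induction with
      | mem x hx =>
        obtain ⟨g, ⟨h, hh, hhg⟩, -, b, hb, rfl⟩ := hx
        intro γ hγ
        rw [coeff_monomial] at hγ
        split_ifs at hγ with hbg
        · subst hbg
          refine ⟨h * g, hhg, lead_of_contraction hlt h g ?_ b hb⟩
          rw [← constantCoeff_eq]
          rwa [← eval_zero']
        · exact absurd rfl hγ
      | zero => intro γ hγ; simp at hγ
      | add x y _ _ hx hy =>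
        intro γ hγ
        by_cases h : coeff γ x = 0
        · apply hy; intro h'; apply hγ; rw [coeff_add, h, h', add_zero]
        · exact hx _ h
      | smul a x _ hx =>
        intro γ hγ
        rw [smul_eq_mul, coeff_mul] at hγ
        obtain ⟨⟨u, v⟩, huv, hnz⟩ := Finset.exists_ne_zero_of_sum_ne_zero hγ
        rw [Finset.HasAntidiagonal.mem_antidiagonal] at huv
        simp only at huv
        rw [← huv]
        exact leadSet_up hlt I v u (hx v (right_ne_zero_of_mul hnz))
    exact hsup β hc
  · rintro ⟨f, hf, hlead⟩
    refine ⟨monomial β 1, Ideal.subset_span ⟨f, ⟨1, by simp, by simpa using hf⟩, ?_, β, hlead, rfl⟩,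
      by simp, ?_⟩
    · rintro rfl; exact hlead.1 (coeff_zero _)
    · intro γ hγ hne
      rw [coeff_monomial, if_neg (Ne.symm hne)] at hγ
      exact absurd rfl hγ

/-- the local Hilbert functions of `I` and of its initial ideal
`J = in_≥(IR₀) ∩ R` agree: `dim_ℂ D₀^d[I] = dim_ℂ D₀^d[J]` for every `d ≥ 0`. -/
theorem hilbert_function_of_initial_ideal (n : ℕ) (I : Ideal (Rn n))
    (lt : (Fin n →₀ ℕ) → (Fin n →₀ ℕ) → Prop) (hlt : IsGradedMonomialOrder lt)
    (d : ℕ) :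
    Module.rank ℂ (truncDualOf I d) = Module.rank ℂ (truncDualOf (initialIdeal lt I) d) := by
  have hB : stdSet lt (initialIdeal lt I) d = stdSet lt I d := by
    unfold stdSet; rw [leadSet_initial hlt]
  rw [truncDualOf_eq, truncDualOf_eq]
  let b₁ := Module.Basis.mk (std_indep hlt I d) (std_span hlt I d)
  let b₂ := Module.Basis.mk (std_indep hlt (initialIdeal lt I) d)
    (std_span hlt (initialIdeal lt I) d)
  let e : (Rn n ⧸ truncW (initialIdeal lt I) d) ≃ₗ[ℂ] (Rn n ⧸ truncW I d) :=
    b₂.equiv b₁ (Equiv.setCongr hB)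
  exact ((truncW I d).dualQuotEquivDualAnnihilator.symm ≪≫ₗ e.dualMap ≪≫ₗ
    (truncW (initialIdeal lt I) d).dualQuotEquivDualAnnihilator).rank_eq
end
end
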